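/- Let f and g be homogeneous polynomials of degree d ≥ 1 in ℂ[x,y,z], and suppose the curve defined by f is nonsingular, i.e. the only common zero in ℂ³ of the three partial derivatives ∂f/∂x, ∂f/∂y, ∂f/∂z is (0,0,0). Then the set of parameters λ ∈ ℂ for which the curve defined by f + λg is singular — i.e. for which there exists (x,y,z) ∈ ℂ³ ∖ {(0,0,0)} at which all three partial derivatives of f + λg vanish — is finite. -/

import Mathlib

open MvPolynomial in
lemma monomial_mem_pow (s : Fin 3 →₀ ℕ) (J : Ideal (MvPolynomial (Fin 3) ℂ))
    (hJ : ∀ j, (X j : MvPolynomial (Fin 3) ℂ) ∈ J) :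
    monomial s (1 : ℂ) ∈ J ^ s.degree := by
  rw [MvPolynomial.monomial_eq, Finsupp.degree_apply, ← Finset.prod_pow_eq_pow_sum, map_one,
    one_mul, Finsupp.prod]
  exact Ideal.prod_mem_prod fun i _ => Ideal.pow_mem_pow (hJ i) _

open MvPolynomial in
lemma homog_coeffs {e M : ℕ} (he : e ≤ M) (q : Fin 3 → MvPolynomial (Fin 3) ℂ)
    (hq : ∀ i, (q i).IsHomogeneous e) (p : MvPolynomial (Fin 3) ℂ) (hp : p.IsHomogeneous M)
    (hmem : p ∈ Ideal.span (Set.range q)) :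
    ∃ a : Fin 3 → MvPolynomial (Fin 3) ℂ, (∀ i, (a i).IsHomogeneous (M - e)) ∧
      ∑ i, a i * q i = p := by
  obtain ⟨c, hc⟩ := Ideal.mem_span_range_iff_exists_fun.1 hmem
  letI := MvPolynomial.gradedAlgebra (σ := Fin 3) (R := ℂ)
  refine ⟨fun i => DirectSum.decompose (homogeneousSubmodule (Fin 3) ℂ) (c i) (M - e),
    fun i => (DirectSum.decompose (homogeneousSubmodule (Fin 3) ℂ) (c i) (M - e)).2, ?_⟩
  have h1 : (DirectSum.decompose (homogeneousSubmodule (Fin 3) ℂ) p M : MvPolynomial (Fin 3) ℂ)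
      = p := DirectSum.decompose_of_mem_same _ hp
  rw [← h1, ← hc, DirectSum.decompose_sum, DFinsupp.finset_sum_apply, AddSubmonoidClass.coe_finset_sum]
  refine Finset.sum_congr rfl fun i _ => ?_
  exact (DirectSum.coe_decompose_mul_of_right_mem_of_le _ (hq i) he).symm

open MvPolynomial in
lemma eval_homog {M : ℕ} [Fintype {m : Fin 3 →₀ ℕ // m.degree = M}]
    (p : MvPolynomial (Fin 3) ℂ) (hp : p.IsHomogeneous M) (x : Fin 3 → ℂ) :
    eval x p = ∑ m : {m : Fin 3 →₀ ℕ // m.degree = M}, p.coeff m.1 * ∏ i, x i ^ m.1 i := by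
  classical
  rw [eval_eq']
  symm
  rw [← Finset.sum_subtype_of_mem (p := fun m : Fin 3 →₀ ℕ => m.degree = M)
    (f := fun m => p.coeff m * ∏ i, x i ^ m i) (s := p.support)]
  · symm
    apply Finset.sum_subset (Finset.subset_univ _)
    intro m _ hm
    simp only [Finset.mem_subtype, mem_support_iff, not_not] at hm
    simp [hm]
  · intro m hm
    rw [Finsupp.degree_eq_weight_one]
    exact hp (mem_support_iff.1 hm)

open MvPolynomial in
/-- If `f` defines a nonsingular projective plane curve of degree `d ≥ 1` and `g` is homogeneous
of degree `d`, then `f + λg` defines a singular curve for only finitely many `λ ∈ ℂ`. -/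
theorem t15 (d : ℕ) (hd : 1 ≤ d) (f g : MvPolynomial (Fin 3) ℂ)
    (hf : f.IsHomogeneous d) (hg : g.IsHomogeneous d)
    (hns : ∀ x : Fin 3 → ℂ,
      (∀ i : Fin 3, MvPolynomial.eval x (MvPolynomial.pderiv i f) = 0) → x = 0) :
    {l : ℂ | ∃ x : Fin 3 → ℂ, x ≠ 0 ∧
      ∀ i : Fin 3,
        MvPolynomial.eval x (MvPolynomial.pderiv i (f + MvPolynomial.C l * g)) = 0}.Finite := by
  classical
  set I : Ideal (MvPolynomial (Fin 3) ℂ) := Ideal.span (Set.range fun i => pderiv i f) with hI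
  have hrad : Ideal.span (Set.range (X : Fin 3 → MvPolynomial (Fin 3) ℂ)) ≤ I.radical := by
    rw [Ideal.span_le]
    rintro _ ⟨j, rfl⟩
    rw [← vanishingIdeal_zeroLocus_eq_radical (K := ℂ) I]
    refine mem_vanishingIdeal_iff.2 fun x hx => ?_
    have hx0 : x = 0 := hns x fun i => by
      have := mem_zeroLocus_iff.1 hx _ (Ideal.subset_span ⟨i, rfl⟩)
      simpa [aeval_eq_eval] using this
    simp [hx0]
  obtain ⟨N, hN⟩ := Ideal.exists_pow_le_of_le_radical_of_fg hrad (IsNoetherian.noetherian _)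
  set M := N + (d - 1) with hM
  haveI : Finite {m : Fin 3 →₀ ℕ // m.degree = M} := (Finsupp.finite_of_degree_eq M).to_subtype
  letI := Fintype.ofFinite {m : Fin 3 →₀ ℕ // m.degree = M}
  have key : ∀ m : {m : Fin 3 →₀ ℕ // m.degree = M}, ∃ a : Fin 3 → MvPolynomial (Fin 3) ℂ,
      (∀ i, (a i).IsHomogeneous N) ∧ ∑ i, a i * pderiv i f = monomial m.1 1 := by
    intro m
    have := homog_coeffs (e := d - 1) (M := M) (by omega) (fun i => pderiv i f)
      (fun i => hf.pderiv) (monomial m.1 1) (isHomogeneous_monomial _ m.2) (by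
        apply hN
        have h := monomial_mem_pow m.1 (Ideal.span (Set.range X))
          (fun j => Ideal.subset_span ⟨j, rfl⟩)
        rw [m.2] at h
        exact Ideal.pow_le_pow_right (by omega) h)
    simpa [hM] using this
  choose a ha hsum using key
  let q : {m : Fin 3 →₀ ℕ // m.degree = M} → MvPolynomial (Fin 3) ℂ :=
    fun m => ∑ i, a m i * pderiv i g
  have hq : ∀ m, (q m).IsHomogeneous M := fun m =>
    IsHomogeneous.sum _ _ _ fun i _ => (ha m i).mul hg.pderiv
  let B : Matrix {m : Fin 3 →₀ ℕ // m.degree = M} {m : Fin 3 →₀ ℕ // m.degree = M} ℂ :=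
    fun m m' => (q m).coeff m'.1
  refine ((Module.End.finite_hasEigenvalue (Matrix.toLin' B)).image (fun μ => -μ⁻¹)).subset ?_
  rintro l ⟨x, hx, hs⟩
  let v : {m : Fin 3 →₀ ℕ // m.degree = M} → ℂ := fun m => ∏ i, x i ^ m.1 i
  have hv : v ≠ 0 := by
    obtain ⟨j, hj⟩ := Function.ne_iff.1 hx
    intro h0
    have := congrFun h0 ⟨Finsupp.single j M, by simp⟩
    simp only [v, Pi.zero_apply, Finset.prod_eq_zero_iff] at this
    obtain ⟨i, _, hi⟩ := this
    by_cases hij : i = j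
    · subst hij
      simp only [Finsupp.single_eq_same] at hi
      exact hj (eq_zero_of_pow_eq_zero hi)
    · simp [Finsupp.single_apply, Ne.symm hij] at hi
  have hBv : ∀ m, v m + l * (B.mulVec v) m = 0 := by
    intro m
    have h1 : (B.mulVec v) m = eval x (q m) := (eval_homog (q m) (hq m) x).symm
    have h2 : v m = eval x (monomial m.1 1) := by
      simp [v, eval_monomial, Finsupp.prod_fintype]
    rw [h1, h2, ← hsum m]
    simp only [q, map_sum, map_mul, Finset.mul_sum, ← Finset.sum_add_distrib]
    refine Finset.sum_eq_zero fun i _ => ?_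
    have := hs i
    rw [map_add, pderiv_C_mul, map_add, map_mul, eval_C] at this
    linear_combination (eval x (a m i)) * this
  have hl : l ≠ 0 := by
    rintro rfl
    exact hv (funext fun m => by simpa using hBv m)
  refine ⟨-l⁻¹, ?_, by simp⟩
  refine Module.End.hasEigenvalue_of_hasEigenvector (x := v) ⟨?_, hv⟩
  rw [Module.End.mem_genEigenspace_one]
  funext m
  rw [Matrix.toLin'_apply, Pi.smul_apply, smul_eq_mul]
  have := hBv m
  field_simp
  linear_combination this
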